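/- arXiv:0804.4244 — 2 statements merged into one kernel-verified Lean document; each statement's English description precedes it below -/
import Mathlib

section
/- Every linear isomorphism T : V → V of a finite-dimensional real vector space has vanishing topological entropy: h(T) = 0, where h denotes the topological entropy defined via admissible coverings (equivalently, sup of measure entropies over T-invariant Borel probabilities on V). -/
open Set Filter Topology

/-- A map is proper if it is continuous and preimages of compact sets are compact. -/
def IsProper {X Y : Type*} [TopologicalSpace X] [TopologicalSpace Y] (f : X → Y) : Prop :=
  Continuous f ∧ ∀ K : Set Y, IsCompact K → IsCompact (f ⁻¹' K)

/-- An admissible covering: open, finite, covers, and each element has compact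
closure or compact complement. -/
def IsAdmissibleCover {X : Type*} [TopologicalSpace X] (α : Set (Set X)) : Prop :=
  α.Finite ∧ (∀ A ∈ α, IsOpen A) ∧ ⋃₀ α = univ ∧
    ∀ A ∈ α, IsCompact (closure A) ∨ IsCompact Aᶜ

/-- `coverIter T α n` is the collection of sets `A₀ ∩ T⁻¹ A₁ ∩ ⋯ ∩ T⁻⁽ⁿ⁻¹⁾ A_{n-1}`
with all `Aᵢ ∈ α`; the paper's `αⁿ` is `coverIter T α (n+1)`. -/
def coverIter {X : Type*} (T : X → X) (α : Set (Set X)) (n : ℕ) : Set (Set X) :=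
  {B | ∃ A : Fin n → Set X, (∀ i, A i ∈ α) ∧ B = ⋂ i : Fin n, T^[i.val] ⁻¹' A i}

/-- `coverNum β` is the minimal cardinality of a (finite) subcover of `β`. -/
noncomputable def coverNum {X : Type*} (β : Set (Set X)) : ℕ :=
  sInf {k | ∃ γ ⊆ β, γ.Finite ∧ ⋃₀ γ = univ ∧ γ.ncard = k}

/-- `h(T, α) = lim (1/n) log N(αⁿ)` (as a limsup, valued in `EReal`). -/
noncomputable def coverEntropyOf {X : Type*} (T : X → X) (α : Set (Set X)) : EReal :=
  Filter.limsup (fun n : ℕ => ((Real.log (coverNum (coverIter T α n)) / n : ℝ) : EReal)) Filter.atTop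

/-- The topological entropy `h(T)`, the supremum of `h(T, α)` over admissible coverings. -/
noncomputable def topEntropy {X : Type*} [TopologicalSpace X] (T : X → X) : EReal :=
  ⨆ (α : Set (Set X)) (_ : IsAdmissibleCover α), coverEntropyOf T α

/-!
Let `W` be a finite-dimensional space of functions on `X`, stable under composition with `T`. If `W`
induces the topology of `X` and contains the constants, then every admissible covering is refined by
the cells on which finitely many `f₁, …, fₘ ∈ W` have constant signs, so its `n`-th iterate is
refined by the sign cells of the `n * m` functions `fⱼ ∘ Tⁱ`, which again lie in `W`. The signs of
functions in `W` have VC dimension at most `dim W` (Dudley), hence by Sauer–Shelah there are only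
polynomially many cells in `n`, and the entropy vanishes. For an affine map of a finite-dimensional
vector space, take for `W` the space of affine functions.
-/

open Asymptotics

section SignPatterns

variable {J X : Type*} [Fintype J]

/-- The sign pattern of a family of real functions at a point, encoded as the set of indices whose
function is nonnegative there; so zero counts as positive. -/
noncomputable def signPattern (f : J → X → ℝ) (x : X) : Finset J := {j | 0 ≤ f j x}

@[simp]
theorem mem_signPattern {f : J → X → ℝ} {x : X} {j : J} : j ∈ signPattern f x ↔ 0 ≤ f j x := by
  simp [signPattern]

/-- The sign patterns realized by a family of real functions, as a set family to which the
Vapnik–Chervonenkis theory of Mathlib applies. -/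
noncomputable def signPatterns (f : J → X → ℝ) : Finset (Finset J) :=
  (range (signPattern f)).toFinite.toFinset

@[simp]
theorem mem_signPatterns {f : J → X → ℝ} {s : Finset J} :
    s ∈ signPatterns f ↔ ∃ x, signPattern f x = s := by
  simp [signPatterns]

variable [DecidableEq J]

theorem coeff_nonneg_of_shatters_signPatterns {f : J → X → ℝ} {s : Finset J}
    (hs : (signPatterns f).Shatters s) {c : J → ℝ} (hc : ∑ j ∈ s, c j • f j = 0) :
    ∀ j ∈ s, 0 ≤ c j := by
  -- At a point where the `f j` have the signs of the `c j`, the relation has no cancellation.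
  obtain ⟨u, hu, hsu⟩ := hs (s.filter_subset (0 ≤ c ·))
  obtain ⟨x, rfl⟩ := mem_signPatterns.1 hu
  have same_sign : ∀ j ∈ s, (0 ≤ f j x ↔ 0 ≤ c j) := fun j hj => by
    simpa [hj] using Finset.ext_iff.1 hsu j
  have term_nonneg : ∀ j ∈ s, 0 ≤ c j * f j x := fun j hj => by
    rcases le_or_gt 0 (c j) with h | h
    · exact mul_nonneg h ((same_sign j hj).2 h)
    · exact mul_nonneg_of_nonpos_of_nonpos h.le
        (not_le.1 ((same_sign j hj).not.2 h.not_ge)).le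
  have sum_eq_zero : ∑ j ∈ s, c j * f j x = 0 := by simpa using congrFun hc x
  intro j hj
  rcases mul_eq_zero.1 ((Finset.sum_eq_zero_iff_of_nonneg term_nonneg).1 sum_eq_zero j hj)
    with h | h
  · exact h.ge
  · exact (same_sign j hj).1 h.ge

theorem linearIndepOn_of_shatters_signPatterns {f : J → X → ℝ} {s : Finset J}
    (hs : (signPatterns f).Shatters s) : LinearIndepOn ℝ f s := by
  refine linearIndepOn_finset_iff.2 fun c hc j hj => le_antisymm ?_ ?_
  · have hneg : ∑ i ∈ s, (-c) i • f i = 0 := by simp [hc]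
    simpa using coeff_nonneg_of_shatters_signPatterns hs hneg j hj
  · exact coeff_nonneg_of_shatters_signPatterns hs hc j hj

theorem vcDim_signPatterns_le_finrank (W : Submodule ℝ (X → ℝ)) [FiniteDimensional ℝ W]
    {f : J → X → ℝ} (hf : ∀ j, f j ∈ W) : (signPatterns f).vcDim ≤ Module.finrank ℝ W := by
  refine Finset.sup_le fun s hs => ?_
  have hli : LinearIndependent ℝ fun j : s => (⟨f j, hf j⟩ : W) :=
    .of_comp W.subtype (linearIndepOn_of_shatters_signPatterns (Finset.mem_shatterer.1 hs))
  simpa using hli.fintype_card_le_finrank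

theorem card_le_of_vcDim_le {𝒜 : Finset (Finset J)} {D : ℕ} (h : 𝒜.vcDim ≤ D) :
    𝒜.card ≤ (D + 1) * (Fintype.card J + 1) ^ D :=
  calc 𝒜.card ≤ 𝒜.shatterer.card := 𝒜.card_le_card_shatterer
    _ ≤ ∑ k ∈ Finset.Iic 𝒜.vcDim, (Fintype.card J).choose k := Finset.card_shatterer_le_sum_vcDim
    _ ≤ ∑ k ∈ Finset.Iic D, (Fintype.card J).choose k := by gcongr
    _ ≤ ∑ _k ∈ Finset.Iic D, (Fintype.card J + 1) ^ D := by
        refine Finset.sum_le_sum fun k hk => (Nat.choose_le_pow _ k).trans ?_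
        rw [Finset.mem_Iic] at hk
        gcongr <;> omega
    _ = (D + 1) * (Fintype.card J + 1) ^ D := by simp

end SignPatterns

section Refinement

variable {J X : Type*} [Fintype J]

/-- The partition of `X` into the cells on which all functions of `f` have constant sign (in the
sense of `signPattern`) refines `α`. -/
def SignCellsRefine (f : J → X → ℝ) (α : Set (Set X)) : Prop :=
  ∀ x, ∃ A ∈ α, ∀ y, signPattern f y = signPattern f x → y ∈ A

theorem SignCellsRefine.coverNum_le {f : J → X → ℝ} {β : Set (Set X)} (h : SignCellsRefine f β) :
    coverNum β ≤ (signPatterns f).card := by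
  choose A hAβ hA using h
  obtain ⟨S, -, hS⟩ := (surjOn_image (signPattern f) univ).exists_bijOn_subset
  rw [image_univ] at hS
  have hSfin : S.Finite := hS.finite_iff_finite.2 (toFinite _)
  have hcover : ⋃₀ (A '' S) = univ := eq_univ_of_forall fun x => by
    obtain ⟨z, hzS, hz⟩ := hS.surjOn (mem_range_self x)
    exact ⟨A z, mem_image_of_mem A hzS, hA z x hz.symm⟩
  calc coverNum β ≤ (A '' S).ncard :=
        Nat.sInf_le ⟨_, image_subset_iff.2 fun x _ => hAβ x, hSfin.image A, hcover, rfl⟩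
    _ ≤ S.ncard := ncard_image_le hSfin
    _ = (signPatterns f).card := by
        rw [hS.ncard_eq, ncard_eq_toFinset_card _ (toFinite _), signPatterns]

theorem SignCellsRefine.coverIter {f : J → X → ℝ} {α : Set (Set X)} (h : SignCellsRefine f α)
    (T : X → X) (n : ℕ) :
    SignCellsRefine (fun (ij : Fin n × J) x => f ij.2 (T^[ij.1] x)) (coverIter T α n) := by
  choose A hAα hA using h
  refine fun x => ⟨_, ⟨fun i => A (T^[i] x), fun i => hAα _, rfl⟩, fun y hy => ?_⟩
  refine mem_iInter.2 fun i => hA _ _ (Finset.ext fun j => ?_)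
  simpa using Finset.ext_iff.1 hy (i, j)

end Refinement

section InducedTopology

variable {X : Type*} [TopologicalSpace X] {W : Submodule ℝ (X → ℝ)}

theorem exists_finite_nonneg_mem_nhds (hone : 1 ∈ W)
    (hW : IsInducing fun (x : X) (f : W) => (f : X → ℝ) x) {p : X} {A : Set X} (hA : A ∈ 𝓝 p) :
    ∃ F : Set (X → ℝ), F.Finite ∧ F ⊆ W ∧
      {x | ∀ f ∈ F, 0 ≤ f x} ∈ 𝓝 p ∧ {x | ∀ f ∈ F, 0 ≤ f x} ⊆ A := by
  have hbasis := hW.basis_nhds (x := p) <| by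
    rw [nhds_pi]
    exact hasBasis_pi fun f : W => Metric.nhds_basis_closedBall (x := (f : X → ℝ) p)
  obtain ⟨⟨I, ε⟩, ⟨hI, hε⟩, hbox⟩ := hbasis.mem_iff.1 hA
  have hconst : ∀ c : ℝ, (fun _ : X => c) ∈ W := fun c => by
    simpa [Pi.smul_def] using W.smul_mem c hone
  let lower (f : W) : X → ℝ := (f : X → ℝ) - fun _ => (f : X → ℝ) p - ε f
  let upper (f : W) : X → ℝ := (fun _ => (f : X → ℝ) p + ε f) - (f : X → ℝ)
  have hbox_eq : {x | ∀ g ∈ lower '' I ∪ upper '' I, 0 ≤ g x} =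
      {x | ∀ f ∈ I, (f : X → ℝ) x ∈ Metric.closedBall ((f : X → ℝ) p) (ε f)} := by
    ext x
    simp only [mem_ofPred_eq, mem_union, or_imp, imp_and, forall_and, forall_mem_image, lower,
      upper, Pi.sub_apply, Real.closedBall_eq_Icc, mem_Icc, sub_nonneg]
  refine ⟨lower '' I ∪ upper '' I, (hI.image _).union (hI.image _), ?_, ?_, ?_⟩
  · rintro _ (⟨f, -, rfl⟩ | ⟨f, -, rfl⟩)
    · exact W.sub_mem f.2 (hconst _)
    · exact W.sub_mem (hconst _) f.2
  · rw [hbox_eq]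
    exact hbasis.mem_of_mem (i := (I, ε)) ⟨hI, hε⟩
  · rw [hbox_eq]
    exact hbox

theorem IsAdmissibleCover.exists_isCompact_compl_mem {α : Set (Set X)} (hα : IsAdmissibleCover α) :
    ∃ K : Set X, IsCompact K ∧ (K = univ ∨ Kᶜ ∈ α) := by
  obtain ⟨hfin, -, hcov, hadm⟩ := hα
  by_cases h : ∃ A ∈ α, IsCompact Aᶜ
  · obtain ⟨A, hA, hc⟩ := h
    exact ⟨Aᶜ, hc, .inr (by rwa [compl_compl])⟩
  · push Not at h
    refine ⟨⋃ A ∈ α, closure A,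
      hfin.isCompact_biUnion fun A hA => (hadm A hA).resolve_right (h A hA), .inl ?_⟩
    rw [← univ_subset_iff, ← hcov, sUnion_eq_biUnion]
    exact iUnion₂_mono fun A _ => subset_closure

theorem exists_signCells_subset_of_isCompact (hone : 1 ∈ W)
    (hW : IsInducing fun (x : X) (f : W) => (f : X → ℝ) x) {K : Set X} (hK : IsCompact K)
    {α : Set (Set X)} (hopen : ∀ A ∈ α, IsOpen A) (hcov : K ⊆ ⋃₀ α) :
    ∃ F : Finset (X → ℝ), (F : Set (X → ℝ)) ⊆ W ∧
      ∀ x ∈ K, ∃ A ∈ α, ∀ y,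
        signPattern ((↑) : F → X → ℝ) y = signPattern (↑) x → y ∈ A := by
  classical
  have hmem : ∀ p : K, ∃ A ∈ α, (p : X) ∈ A := fun p => hcov p.2
  choose A hAα hpA using hmem
  choose F hFfin hFW hFnhds hFA using fun p : K =>
    exists_finite_nonneg_mem_nhds hone hW ((hopen _ (hAα p)).mem_nhds (hpA p))
  obtain ⟨t, hKt⟩ := hK.elim_nhds_subcover' _ fun p hp => hFnhds ⟨p, hp⟩
  refine ⟨t.biUnion fun p => (hFfin p).toFinset, fun f hf => ?_, fun x hx => ?_⟩
  · obtain ⟨p, -, hp⟩ := Finset.mem_biUnion.1 hf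
    exact hFW p ((hFfin p).mem_toFinset.1 hp)
  · obtain ⟨p, hp, hpx⟩ := mem_iUnion₂.1 (hKt hx)
    refine ⟨A p, hAα p, fun y hy => hFA p fun f hf => ?_⟩
    have same_sign := Finset.ext_iff.1 hy
      ⟨f, Finset.mem_biUnion.2 ⟨p, hp, (hFfin p).mem_toFinset.2 hf⟩⟩
    simp only [mem_signPattern] at same_sign
    exact same_sign.2 (hpx f hf)

theorem IsAdmissibleCover.exists_signCellsRefine {α : Set (Set X)} (hα : IsAdmissibleCover α)
    (hone : 1 ∈ W) (hW : IsInducing fun (x : X) (f : W) => (f : X → ℝ) x) :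
    ∃ F : Finset (X → ℝ), (F : Set (X → ℝ)) ⊆ W ∧
      SignCellsRefine ((↑) : F → X → ℝ) α := by
  obtain ⟨K, hK, hKα⟩ := hα.exists_isCompact_compl_mem
  obtain ⟨-, hopen, hcov, -⟩ := hα
  obtain ⟨F, hFW, hF⟩ :=
    exists_signCells_subset_of_isCompact hone hW hK hopen (hcov ▸ subset_univ K)
  refine ⟨F, hFW, fun x => ?_⟩
  by_cases hx : ∃ z ∈ K, signPattern ((↑) : F → X → ℝ) z = signPattern (↑) x
  · obtain ⟨z, hzK, hz⟩ := hx
    simpa only [hz] using hF z hzK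
  · have notMem_K : ∀ y, signPattern ((↑) : F → X → ℝ) y = signPattern (↑) x → y ∉ K :=
      fun y hy hyK => hx ⟨y, hyK, hy⟩
    rcases hKα with rfl | hKα
    · exact absurd (mem_univ x) (notMem_K x rfl)
    · exact ⟨Kᶜ, hKα, notMem_K⟩

end InducedTopology

theorem tendsto_log_div_of_isBigO_pow {a : ℕ → ℕ} {D : ℕ}
    (ha : (fun n => (a n : ℝ)) =O[atTop] fun n => (n : ℝ) ^ D) :
    Tendsto (fun n => Real.log (a n) / n) atTop (𝓝 0) := by
  obtain ⟨C, haC, hC⟩ :=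
    ((isBigO_iff_eventually.1 ha).and (eventually_ge_atTop 1)).exists
  have hlog : Tendsto (fun n : ℕ => Real.log n / n) atTop (𝓝 0) :=
    Real.isLittleO_log_id_atTop.tendsto_div_nhds_zero.comp tendsto_natCast_atTop_atTop
  have hbound : Tendsto (fun n : ℕ => Real.log C / n + D * (Real.log n / n)) atTop (𝓝 0) := by
    simpa using (tendsto_const_div_atTop_nhds_zero_nat (Real.log C)).add (hlog.const_mul (D : ℝ))
  refine squeeze_zero' (.of_forall fun n => by positivity) ?_ hbound
  filter_upwards [haC, eventually_ge_atTop 1] with n han hn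
  rw [← mul_div_assoc, ← add_div]
  gcongr
  rcases Nat.eq_zero_or_pos (a n) with h | h
  · rw [h, Nat.cast_zero, Real.log_zero]
    have := Real.log_nonneg hC
    positivity
  · calc Real.log (a n) ≤ Real.log (C * (n : ℝ) ^ D) :=
          Real.log_le_log (by exact_mod_cast h) (by simpa using han)
      _ = Real.log C + D * Real.log n := by
          rw [Real.log_mul (by positivity) (by positivity), Real.log_pow]

theorem isBigO_const_mul_mul_add_one_pow (C m : ℝ) (D : ℕ) :
    (fun n : ℕ => C * (n * m + 1) ^ D) =O[atTop] fun n => (n : ℝ) ^ D := by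
  have hone : (fun _ : ℕ => (1 : ℝ)) =O[atTop] fun n => (n : ℝ) :=
    ((isLittleO_const_id_atTop (1 : ℝ)).comp_tendsto tendsto_natCast_atTop_atTop).isBigO
  refine ((IsBigO.add ?_ hone).pow D).const_mul_left _
  simpa only [mul_comm] using (isBigO_refl (fun n : ℕ => (n : ℝ)) atTop).const_mul_left m

theorem coverEntropyOf_eq_zero_of_isBigO_pow {X : Type*} {T : X → X} {α : Set (Set X)} {D : ℕ}
    (h : (fun n => (coverNum (coverIter T α n) : ℝ)) =O[atTop] fun n => (n : ℝ) ^ D) :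
    coverEntropyOf T α = 0 :=
  ((continuous_coe_real_ereal.tendsto 0).comp (tendsto_log_div_of_isBigO_pow h)).limsup_eq

section Entropy

variable {X : Type*} [TopologicalSpace X]

theorem isAdmissibleCover_singleton_univ : IsAdmissibleCover ({univ} : Set (Set X)) :=
  ⟨finite_singleton _, by simp, by simp, by simp⟩

theorem topEntropy_eq_zero_of_finiteDimensional (W : Submodule ℝ (X → ℝ)) [FiniteDimensional ℝ W]
    (hone : 1 ∈ W) (hW : IsInducing fun (x : X) (f : W) => (f : X → ℝ) x) {T : X → X}
    (hT : ∀ f ∈ W, f ∘ T ∈ W) : topEntropy T = 0 := by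
  classical
  have hTiter : ∀ (n : ℕ), ∀ f ∈ W, f ∘ T^[n] ∈ W := fun n => by
    induction n with
    | zero => exact fun f hf => hf
    | succ n ih => exact fun f hf => hT _ (ih f hf)
  have cover_eq_zero : ∀ α : Set (Set X), IsAdmissibleCover α → coverEntropyOf T α = 0 := by
    intro α hα
    obtain ⟨F, hFW, hF⟩ := hα.exists_signCellsRefine hone hW
    refine coverEntropyOf_eq_zero_of_isBigO_pow
      (.trans (.of_norm_le fun n => ?_)
        (isBigO_const_mul_mul_add_one_pow (Module.finrank ℝ W + 1) F.card (Module.finrank ℝ W)))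
    have hvc := vcDim_signPatterns_le_finrank W
      fun ij : Fin n × F => hTiter ij.1 _ (hFW ij.2.2)
    have hcard := (hF.coverIter T n).coverNum_le.trans (card_le_of_vcDim_le hvc)
    simpa using (Nat.cast_le (α := ℝ)).2 hcard
  refine le_antisymm (iSup₂_le fun α hα => (cover_eq_zero α hα).le) ?_
  exact le_iSup₂_of_le _ isAdmissibleCover_singleton_univ
    (cover_eq_zero _ isAdmissibleCover_singleton_univ).ge

end Entropy

section Affine

variable (V : Type*) [AddCommGroup V] [Module ℝ V]

/-- The space of real affine functions on a real vector space, as a space of plain functions. -/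
def affineFunctions : Submodule ℝ (V → ℝ) :=
  LinearMap.range
    ({ toFun := fun f => f, map_add' := fun _ _ => rfl, map_smul' := fun _ _ => rfl } :
      (V →ᵃ[ℝ] ℝ) →ₗ[ℝ] V → ℝ)

variable {V}

instance [FiniteDimensional ℝ V] : FiniteDimensional ℝ (affineFunctions V) :=
  Module.Finite.range _

variable [TopologicalSpace V] [IsTopologicalAddGroup V] [ContinuousSMul ℝ V] [T2Space V]
  [FiniteDimensional ℝ V]

theorem isInducing_affineFunctions :
    IsInducing fun (x : V) (f : affineFunctions V) => (f : V → ℝ) x := by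
  let e : V ≃L[ℝ] (Fin (Module.finrank ℝ V) → ℝ) := .ofFinrankEq (by simp)
  let coord (i : Fin (Module.finrank ℝ V)) : V →ᵃ[ℝ] ℝ :=
    (LinearMap.proj (φ := fun _ => ℝ) i ∘ₗ e.toLinearMap).toAffineMap
  let readCoord (φ : affineFunctions V → ℝ) (i : Fin (Module.finrank ℝ V)) : ℝ :=
    φ ⟨coord i, coord i, rfl⟩
  have hcomp : IsInducing (readCoord ∘ fun x f => (f : V → ℝ) x) := e.toHomeomorph.isInducing
  refine hcomp.of_comp (continuous_pi ?_) (by fun_prop)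
  rintro ⟨_, f, rfl⟩
  exact AffineMap.continuous_linear_iff.1 f.linear.continuous_of_finiteDimensional

theorem topEntropy_linear_eq_zero_general (T : V →ᵃ[ℝ] V) : topEntropy T = 0 := by
  refine topEntropy_eq_zero_of_finiteDimensional (affineFunctions V) ⟨.const ℝ V 1, rfl⟩
    isInducing_affineFunctions ?_
  rintro _ ⟨f, rfl⟩
  exact ⟨f.comp T, rfl⟩

end Affine

/-- every linear isomorphism of a finite-dimensional real vector space
has vanishing topological entropy. -/
theorem topEntropy_linear_eq_zero {V : Type*} [NormedAddCommGroup V] [NormedSpace ℝ V]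
    [FiniteDimensional ℝ V] (T : V →ₗ[ℝ] V) (hbij : Function.Bijective T) :
    topEntropy (T : V → V) = 0 :=
  topEntropy_linear_eq_zero_general T.toAffineMap
end

section
/- Let T : X → X be a continuous map on a locally compact separable metrizable space and suppose the recurrent set R(T) is closed. Then every T-invariant Borel probability measure μ satisfies h_μ(T) = h_μ(T|_{R(T)}); consequently the topological entropy satisfies h(T) = h(T|_{R(T)}). -/
open Set Filter Topology

open MeasureTheory

/-- A finite Borel (measurable) partition of the space. -/
def IsFinBorelPartition {X : Type*} [MeasurableSpace X] (𝒜 : Set (Set X)) : Prop :=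
  𝒜.Finite ∧ (∀ A ∈ 𝒜, MeasurableSet A) ∧ 𝒜.PairwiseDisjoint id ∧ ⋃₀ 𝒜 = Set.univ

/-- The entropy `H(𝒜) = Σ_{B ∈ 𝒜} φ(μ(B))` with `φ(x) = -x log x`. -/
noncomputable def partStatic {X : Type*} [MeasurableSpace X] (μ : Measure X)
    (𝒜 : Set (Set X)) : ℝ :=
  ∑ᶠ B ∈ 𝒜, Real.negMulLog (μ B).toReal

/-- `h(T, 𝒜) = lim (1/n) H(𝒜ⁿ)` (as a limsup), where `𝒜ⁿ` is the common refinement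
`𝒜 ∨ T⁻¹𝒜 ∨ ⋯ ∨ T⁻⁽ⁿ⁻¹⁾𝒜 = coverIter T 𝒜 n`. -/
noncomputable def measPartEntropy {X : Type*} [MeasurableSpace X] (T : X → X)
    (μ : Measure X) (𝒜 : Set (Set X)) : EReal :=
  Filter.limsup (fun n : ℕ => ((partStatic μ (coverIter T 𝒜 n) / n : ℝ) : EReal)) Filter.atTop

/-- The measure-theoretic (Kolmogorov–Sinai) entropy `h_μ(T)`, the supremum of
`h(T, 𝒜)` over all finite Borel partitions `𝒜`. -/
noncomputable def measEntropy {X : Type*} [MeasurableSpace X] (T : X → X)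
    (μ : Measure X) : EReal :=
  ⨆ (𝒜 : Set (Set X)) (_ : IsFinBorelPartition 𝒜), measPartEntropy T μ 𝒜

/-- The recurrent set of `T`: points in their own ω-limit set. -/
def recurrentSet {X : Type*} [TopologicalSpace X] (T : X → X) : Set X :=
  {x | MapClusterPt x Filter.atTop fun n => T^[n] x}

/-! By Poincaré recurrence every invariant probability measure lives on `F = R(T)`, so passing to
the restriction does not change any measure entropy.

For the topological entropy, let `C` be a compact set disjoint from `F`. If there were arbitrarily
long orbit segments spending a positive proportion of time in `C`, a limit of their empirical
measures would be an invariant measure charging `C`. Hence visits to `C` are uniformly rare. Given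
an admissible cover `α` with `Aᶜ` compact, `A ∈ α`, choose `p` such that about `exp (p h)` cylinders
of length `p` cover `F`, where `h` is the entropy of the trace of `α` on `F`, and let `U ⊇ F` be
their union. Each orbit is then coded by blocks of length `p` in `U`, single steps in `A`, which
offer no choice, and single steps in the compact set `Aᶜ \ U`, which are rare. Counting these codes
shows that `α` has entropy at most `h` in `X`. -/

section Cylinders

variable {X Y : Type*} {S : Y → Y} {T : X → X} {f : Y → X} {α : Set (Set X)} {β : Set (Set Y)}
  {m n : ℕ}

lemma semiconj_val_restrict {F : Set X} (hM : MapsTo T F F) :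
    Function.Semiconj Subtype.val (hM.restrict T F F) T :=
  fun _ => rfl

lemma sUnion_image_preimage (f : Y → X) (hα : ⋃₀ α = univ) :
    ⋃₀ (preimage f '' α) = univ := by
  rw [sUnion_image, ← preimage_sUnion, hα, preimage_univ]

lemma mem_coverIter_one {A : Set X} (hA : A ∈ α) : A ∈ coverIter T α 1 :=
  ⟨fun _ => A, fun _ => hA, by simp [iInter_const]⟩

lemma inter_preimage_mem_coverIter {B B' : Set X} (hB : B ∈ coverIter T α m)
    (hB' : B' ∈ coverIter T α n) : B ∩ T^[m] ⁻¹' B' ∈ coverIter T α (m + n) := by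
  obtain ⟨A, hA, rfl⟩ := hB
  obtain ⟨A', hA', rfl⟩ := hB'
  refine ⟨Fin.append A A', Fin.addCases (by simpa using hA) (by simpa using hA'), ?_⟩
  ext x
  simp [Fin.forall_fin_add, ← Function.iterate_add_apply, add_comm]

lemma exists_superset_mem_coverIter_of_le (hmn : m ≤ n) {B : Set X} (hB : B ∈ coverIter T α n) :
    ∃ B' ∈ coverIter T α m, B ⊆ B' := by
  obtain ⟨A, hA, rfl⟩ := hB
  exact ⟨_, ⟨fun i => A (i.castLE hmn), fun i => hA _, rfl⟩,
    subset_iInter fun i => iInter_subset_of_subset (i.castLE hmn) subset_rfl⟩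

lemma finite_coverIter (hα : α.Finite) (n : ℕ) : (coverIter T α n).Finite := by
  refine ((Set.Finite.pi' fun _ : Fin n => hα).image
    fun A => ⋂ i : Fin n, T^[i.val] ⁻¹' A i).subset ?_
  rintro _ ⟨A, hA, rfl⟩
  exact ⟨A, hA, rfl⟩

lemma sUnion_coverIter (hα : ⋃₀ α = univ) (n : ℕ) : ⋃₀ coverIter T α n = univ := by
  rw [sUnion_eq_univ_iff] at hα ⊢
  choose A hA hxA using hα
  exact fun x => ⟨_, ⟨fun i => A (T^[i.val] x), fun _ => hA _, rfl⟩, mem_iInter.2 fun _ => hxA _⟩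

lemma coverIter_image_preimage (h : Function.Semiconj f S T) (α : Set (Set X)) (n : ℕ) :
    coverIter S (preimage f '' α) n = preimage f '' coverIter T α n := by
  have key (A : Fin n → Set X) :
      ⋂ i : Fin n, S^[i.val] ⁻¹' (f ⁻¹' A i) = f ⁻¹' ⋂ i : Fin n, T^[i.val] ⁻¹' A i := by
    simp only [preimage_iInter, ← preimage_comp, (h.iterate_right _).comp_eq]
  ext B
  constructor
  · rintro ⟨A, hA, rfl⟩
    choose A' hA' hAA' using hA
    obtain rfl : (fun i => f ⁻¹' A' i) = A := funext hAA'
    exact ⟨_, ⟨A', hA', rfl⟩, (key A').symm⟩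
  · rintro ⟨_, ⟨A, hA, rfl⟩, rfl⟩
    exact ⟨fun i => f ⁻¹' A i, fun i => mem_image_of_mem _ (hA i), (key A).symm⟩

lemma exists_superset_mem_coverIter_of_refines {α' : Set (Set X)} (h : ∀ A ∈ α, ∃ A' ∈ α', A ⊆ A')
    {B : Set X} (hB : B ∈ coverIter T α n) : ∃ B' ∈ coverIter T α' n, B ⊆ B' := by
  obtain ⟨A, hA, rfl⟩ := hB
  choose A' hA' hAA' using fun i => h (A i) (hA i)
  exact ⟨_, ⟨A', hA', rfl⟩, iInter_mono fun i => preimage_mono (hAA' i)⟩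

variable (T α) in
/-- The set `s` is covered by at most `c` of the cylinders of length `n` over `α`, i.e. of the
elements of `coverIter T α n`. The bound `c` is real because it will be an exponential. -/
def HasCylinderCover (s : Set X) (n : ℕ) (c : ℝ) : Prop :=
  ∃ γ : Finset (Set X), ↑γ ⊆ coverIter T α n ∧ s ⊆ ⋃₀ ↑γ ∧ (γ.card : ℝ) ≤ c

lemma coverNum_le_of_hasCylinderCover {c : ℝ} (h : HasCylinderCover T α univ n c) :
    (coverNum (coverIter T α n) : ℝ) ≤ c := by
  obtain ⟨γ, hγ, hcover, hcard⟩ := h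
  have hle : coverNum (coverIter T α n) ≤ γ.card :=
    Nat.sInf_le ⟨γ, hγ, γ.finite_toSet, univ_subset_iff.1 hcover, ncard_coe_finset γ⟩
  exact (Nat.cast_le.2 hle).trans hcard

lemma hasCylinderCover_coverNum (hfin : α.Finite) (hα : ⋃₀ α = univ) (n : ℕ) :
    HasCylinderCover T α univ n (coverNum (coverIter T α n)) := by
  obtain ⟨γ, hγ, hfinγ, hcover, hcard⟩ :=
    Nat.sInf_mem (s := {k | ∃ γ ⊆ coverIter T α n, γ.Finite ∧ ⋃₀ γ = univ ∧ γ.ncard = k})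
      ⟨_, _, subset_rfl, finite_coverIter hfin n, sUnion_coverIter hα n, rfl⟩
  refine ⟨hfinγ.toFinset, by simpa using hγ, by simp [hcover], ?_⟩
  rw [← ncard_eq_toFinset_card γ hfinγ, hcard, coverNum]

namespace HasCylinderCover

variable {s s' : Set X} {t : Set Y} {c c' : ℝ}

lemma mono (h : HasCylinderCover T α s n c) (hs : s' ⊆ s) (hc : c ≤ c') :
    HasCylinderCover T α s' n c' := by
  obtain ⟨γ, hγ, hcover, hcard⟩ := h
  exact ⟨γ, hγ, hs.trans hcover, hcard.trans hc⟩

lemma of_eq_empty (hs : s = ∅) (hc : 0 ≤ c) : HasCylinderCover T α s n c :=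
  ⟨∅, by simp, by simp [hs], by simpa⟩

lemma of_mem {A : Set X} (hA : A ∈ α) : HasCylinderCover T α A 1 1 :=
  ⟨{A}, by simpa using mem_coverIter_one hA, by simp, by simp⟩

lemma union (h : HasCylinderCover T α s n c) (h' : HasCylinderCover T α s' n c') :
    HasCylinderCover T α (s ∪ s') n (c + c') := by
  classical
  obtain ⟨γ, hγ, hcover, hcard⟩ := h
  obtain ⟨γ', hγ', hcover', hcard'⟩ := h'
  refine ⟨γ ∪ γ', by simp [hγ, hγ'], ?_, ?_⟩
  · rw [Finset.coe_union, sUnion_union]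
    exact union_subset_union hcover hcover'
  · calc ((γ ∪ γ').card : ℝ) ≤ γ.card + γ'.card := mod_cast Finset.card_union_le γ γ'
      _ ≤ c + c' := add_le_add hcard hcard'

lemma transfer (h : HasCylinderCover T α s n c) (g : Set X → Set Y)
    (hg : ∀ B ∈ coverIter T α n, g B ∈ coverIter S β m)
    (hgt : ∀ y ∈ t, ∃ x ∈ s, ∀ B ∈ coverIter T α n, x ∈ B → y ∈ g B) :
    HasCylinderCover S β t m c := by
  classical
  obtain ⟨γ, hγ, hcover, hcard⟩ := h
  refine ⟨γ.image g, ?_, fun y hy => ?_, (Nat.cast_le.2 Finset.card_image_le).trans hcard⟩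
  · rw [Finset.coe_image, image_subset_iff]
    exact fun B hB => hg B (hγ hB)
  · obtain ⟨x, hx, hxy⟩ := hgt y hy
    obtain ⟨B, hB, hxB⟩ := hcover hx
    exact ⟨g B, Finset.mem_coe.2 (Finset.mem_image_of_mem g hB), hxy B (hγ hB) hxB⟩

lemma of_le (h : HasCylinderCover T α s n c) (hmn : m ≤ n) : HasCylinderCover T α s m c := by
  choose! g hg hsub using fun B (hB : B ∈ coverIter T α n) =>
    exists_superset_mem_coverIter_of_le hmn hB
  exact h.transfer g hg fun x hx => ⟨x, hx, fun B hB hxB => hsub B hB hxB⟩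

lemma preimage (h : HasCylinderCover T α univ n c) (hf : Function.Semiconj f S T)
    (hαβ : ∀ A ∈ α, ∃ B ∈ β, f ⁻¹' A ⊆ B) : HasCylinderCover S β univ n c := by
  have hrefine (B : Set X) (hB : B ∈ coverIter T α n) : ∃ B' ∈ coverIter S β n, f ⁻¹' B ⊆ B' :=
    exists_superset_mem_coverIter_of_refines (forall_mem_image.2 hαβ)
      (coverIter_image_preimage hf α n ▸ mem_image_of_mem _ hB)
  choose! g hg hsub using hrefine
  exact h.transfer g hg fun y _ => ⟨f y, mem_univ _, fun B hB hyB => hsub B hB hyB⟩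

lemma of_preimage (h : HasCylinderCover S (Set.preimage f '' α) univ n c)
    (hf : Function.Semiconj f S T) : HasCylinderCover T α (range f) n c := by
  have hlift (B : Set Y) (hB : B ∈ coverIter S (Set.preimage f '' α) n) :
      ∃ B' ∈ coverIter T α n, f ⁻¹' B' = B := by
    rwa [coverIter_image_preimage hf] at hB
  choose! g hg hgB using hlift
  refine h.transfer g hg (forall_mem_range.2 fun y => ⟨y, mem_univ y, fun B hB hyB => ?_⟩)
  rwa [← hgB B hB] at hyB

lemma concat (h : HasCylinderCover T α s m c) (h' : HasCylinderCover T α s' n c') :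
    HasCylinderCover T α (s ∩ T^[m] ⁻¹' s') (m + n) (c * c') := by
  classical
  obtain ⟨γ, hγ, hcover, hcard⟩ := h
  obtain ⟨γ', hγ', hcover', hcard'⟩ := h'
  refine ⟨Finset.image₂ (fun B B' => B ∩ T^[m] ⁻¹' B') γ γ', ?_, ?_, ?_⟩
  · rw [Finset.coe_image₂, image2_subset_iff]
    exact fun B hB B' hB' => inter_preimage_mem_coverIter (hγ hB) (hγ' hB')
  · rintro x ⟨hx, hx'⟩
    obtain ⟨B, hB, hxB⟩ := hcover hx
    obtain ⟨B', hB', hxB'⟩ := hcover' hx'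
    exact ⟨_, Finset.mem_coe.2 (Finset.mem_image₂_of_mem hB hB'), hxB, hxB'⟩
  · calc ((Finset.image₂ (fun B B' => B ∩ T^[m] ⁻¹' B') γ γ').card : ℝ) ≤ γ.card * γ'.card :=
          mod_cast Finset.card_image₂_le _ _ _
      _ ≤ c * c' := mul_le_mul hcard hcard' (by positivity) ((Nat.cast_nonneg _).trans hcard)

lemma exists_isOpen_superset [TopologicalSpace X] (hT : Continuous T) (hα : ∀ A ∈ α, IsOpen A)
    (h : HasCylinderCover T α s n c) :
    ∃ U, IsOpen U ∧ s ⊆ U ∧ HasCylinderCover T α U n c := by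
  obtain ⟨γ, hγ, hcover, hcard⟩ := h
  refine ⟨⋃₀ ↑γ, isOpen_sUnion fun B hB => ?_, hcover, γ, hγ, subset_rfl, hcard⟩
  obtain ⟨A, hA, rfl⟩ := hγ hB
  exact isOpen_iInter_of_finite fun i => (hα _ (hA i)).preimage (hT.iterate i)

end HasCylinderCover

end Cylinders

section Counting

variable {X : Type*} {T : X → X} {α : Set (Set X)} {U A C : Set X} {p : ℕ} {N a D q r : ℝ}

lemma birkhoffSum_nonneg {g : X → ℝ} (hg : 0 ≤ g) (n : ℕ) (x : X) : 0 ≤ birkhoffSum T g n x :=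
  Finset.sum_nonneg fun _ _ => hg _

lemma indicator_one_nonneg (C : Set X) : 0 ≤ C.indicator (1 : X → ℝ) :=
  indicator_nonneg fun _ _ => zero_le_one

lemma birkhoffSum_iterate_of_le (g : X → ℝ) {m n : ℕ} (hmn : m ≤ n) (x : X) :
    birkhoffSum T g (n - m) (T^[m] x) = birkhoffSum T g n x - birkhoffSum T g m x := by
  rw [eq_sub_iff_add_eq', ← birkhoffSum_add, Nat.add_sub_cancel' hmn]

/- Peel off the beginning of an orbit: `p` steps in `U`, one step in `A`, or one step in `C`, which
uses up one of the allowed visits. -/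
lemma hasCylinderCover_setOf_birkhoffSum_le (hp : 0 < p) (hr : 0 ≤ r) (hq : 0 ≤ q)
    (hU : HasCylinderCover T α U p N) (hA : HasCylinderCover T α A 1 1)
    (hC : HasCylinderCover T α C 1 a) (hUAC : U ∪ A ∪ C = univ)
    (hD : HasCylinderCover T α univ p D)
    (hcost : N * Real.exp (-(r * p)) + Real.exp (-r) + a * Real.exp (-(r + q)) ≤ 1) (n : ℕ)
    (b : ℝ) :
    HasCylinderCover T α {x | birkhoffSum T (C.indicator 1) n x ≤ b} n
      (D * Real.exp (r * n + q * b)) := by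
  have hvisits := birkhoffSum_nonneg (T := T) (indicator_one_nonneg C)
  have hD0 : 0 ≤ D := by
    obtain ⟨γ, -, -, hcard⟩ := hD
    exact (Nat.cast_nonneg _).trans hcard
  induction n using Nat.strong_induction_on generalizing b with
  | _ n ih =>
  rcases lt_or_ge b 0 with hb | hb
  · exact .of_eq_empty (eq_empty_of_forall_notMem fun x hx => (hb.trans_le (hvisits n x)).not_ge hx)
      (by positivity)
  rcases lt_or_ge n p with hnp | hpn
  · exact (hD.of_le hnp.le).mono (subset_univ _)
      (le_mul_of_one_le_right hD0 (Real.one_le_exp (by positivity)))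
  have branch {s : Set X} {m : ℕ} {c : ℝ} (hs : HasCylinderCover T α s m c) (hm : 0 < m)
      (hmn : m ≤ n) (b' : ℝ) :
      HasCylinderCover T α
        (s ∩ T^[m] ⁻¹' {x | birkhoffSum T (C.indicator 1) (n - m) x ≤ b'}) n
        (c * Real.exp (-(r * m) - q * (b - b')) * (D * Real.exp (r * n + q * b))) := by
    convert hs.concat (ih (n - m) (by lia) b') using 1
    · lia
    · rw [Nat.cast_sub hmn, mul_assoc, mul_left_comm (Real.exp _), ← Real.exp_add]
      ring_nf
  refine ((branch hU hp hpn b).union (branch hA one_pos (by lia) b)).union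
    (branch hC one_pos (by lia) (b - 1)) |>.mono (fun x hx => ?_) ?_
  · have htail {m : ℕ} (hmn : m ≤ n) : birkhoffSum T (C.indicator 1) (n - m) (T^[m] x) ≤ b :=
      (birkhoffSum_iterate_of_le _ hmn x).trans_le ((sub_le_self _ (hvisits m x)).trans hx)
    rcases hUAC.symm.subset (mem_univ x) with (hxU | hxA) | hxC
    · exact .inl (.inl ⟨hxU, htail hpn⟩)
    · exact .inl (.inr ⟨hxA, htail (by lia)⟩)
    · refine .inr ⟨hxC, (birkhoffSum_iterate_of_le _ (by lia) x).trans_le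
        ((sub_le_sub_right hx _).trans_eq ?_)⟩
      simp [hxC]
  · rw [← add_mul, ← add_mul]
    refine mul_le_of_le_one_left (by positivity) (hcost.trans_eq' ?_)
    simp [sub_eq_add_neg, add_comm]

lemma exists_block_parameters {N : ℕ → ℝ} {t r : ℝ} (htr : t < r) (hr : 0 < r)
    (hN : ∀ᶠ p : ℕ in atTop, N p ≤ Real.exp (t * p)) (a : ℝ) :
    ∃ p : ℕ, 0 < p ∧ ∃ q : ℝ, 0 ≤ q ∧
      N p * Real.exp (-(r * p)) + Real.exp (-r) + a * Real.exp (-(r + q)) ≤ 1 := by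
  have hblock : Tendsto (fun p : ℕ => Real.exp (-((r - t) * p)) + Real.exp (-r)) atTop
      (𝓝 (0 + Real.exp (-r))) :=
    (Real.tendsto_exp_neg_atTop_nhds_zero.comp
      (tendsto_natCast_atTop_atTop.const_mul_atTop (sub_pos.2 htr))).add_const _
  have hlt : 0 + Real.exp (-r) < 1 := by simpa
  obtain ⟨p, hp, hNp, hblockp⟩ := ((eventually_gt_atTop 0).and
    (hN.and (hblock.eventually_lt_const hlt))).exists
  have hrare : Tendsto (fun q : ℝ => N p * Real.exp (-(r * p)) + Real.exp (-r) +
      a * Real.exp (-(r + q))) atTop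
      (𝓝 (N p * Real.exp (-(r * p)) + Real.exp (-r) + a * 0)) :=
    ((Real.tendsto_exp_neg_atTop_nhds_zero.comp
      (tendsto_atTop_add_const_left _ r tendsto_id)).const_mul a).const_add _
  have hNp' : N p * Real.exp (-(r * p)) ≤ Real.exp (-((r - t) * p)) :=
    calc N p * Real.exp (-(r * p)) ≤ Real.exp (t * p) * Real.exp (-(r * p)) := by gcongr
      _ = Real.exp (-((r - t) * p)) := by rw [← Real.exp_add]; ring_nf
  obtain ⟨q, hq, hqle⟩ := ((eventually_ge_atTop 0).and
    (hrare.eventually_lt_const (u := 1) (by linarith))).exists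
  exact ⟨p, hp, q, hq, hqle.le⟩

end Counting

section Entropy

open scoped Real

variable {X Y : Type*} {S : Y → Y} {T : X → X} {f : Y → X} {α : Set (Set X)} {β : Set (Set Y)}

lemma coverEntropyOf_nonneg (T : X → X) (α : Set (Set X)) : 0 ≤ coverEntropyOf T α :=
  le_limsup_of_frequently_le
    (.of_forall fun n => mod_cast div_nonneg (Real.log_natCast_nonneg _) n.cast_nonneg)

lemma coverEntropyOf_of_isEmpty [IsEmpty X] (T : X → X) (α : Set (Set X)) :
    coverEntropyOf T α = 0 := by
  have hnum (n : ℕ) : coverNum (coverIter T α n) = 0 :=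
    Nat.le_zero.1 (Nat.sInf_le
      ⟨∅, empty_subset _, finite_empty, Subsingleton.elim _ _, ncard_empty _⟩)
  simp [coverEntropyOf, hnum]

lemma eventually_coverNum_le_exp {t : ℝ} (ht : coverEntropyOf T α < t) :
    ∀ᶠ n : ℕ in atTop, (coverNum (coverIter T α n) : ℝ) ≤ Real.exp (t * n) := by
  filter_upwards [eventually_lt_of_limsup_lt ht, eventually_gt_atTop 0] with n hn hn0
  refine (Real.le_exp_log _).trans (Real.exp_le_exp.2 ?_)
  rw [← div_le_iff₀ (Nat.cast_pos.2 hn0)]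
  exact_mod_cast hn.le

lemma coverEntropyOf_le_of_hasCylinderCover {s D : ℝ} (hs : 0 ≤ s)
    (h : ∀ᶠ n : ℕ in atTop, HasCylinderCover T α univ n (D * Real.exp (s * n))) :
    coverEntropyOf T α ≤ s := by
  have hlim : Tendsto (fun n : ℕ => ((log⁺ D / n + s : ℝ) : EReal)) atTop (𝓝 s) := by
    rw [EReal.tendsto_coe]
    simpa using (tendsto_const_div_atTop_nhds_zero_nat (log⁺ D)).add_const s
  refine (limsup_le_limsup ?_).trans_eq hlim.limsup_eq
  filter_upwards [h, eventually_gt_atTop 0] with n hn hn0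
  have hn0' : (0 : ℝ) < n := Nat.cast_pos.2 hn0
  rw [EReal.coe_le_coe_iff, div_le_iff₀ hn0', add_mul, div_mul_cancel₀ _ hn0'.ne']
  calc Real.log (coverNum (coverIter T α n)) = log⁺ (coverNum (coverIter T α n)) :=
        Real.log_of_nat_eq_posLog.symm
    _ ≤ log⁺ (D * Real.exp (s * n)) :=
        Real.posLog_le_posLog (Nat.cast_nonneg _) (coverNum_le_of_hasCylinderCover hn)
    _ ≤ log⁺ D + log⁺ (Real.exp (s * n)) := Real.posLog_mul
    _ = log⁺ D + s * n := by
        have hexp : 1 ≤ |Real.exp (s * n)| := by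
          rw [Real.abs_exp]
          exact Real.one_le_exp (by positivity)
        rw [Real.posLog_eq_log hexp, Real.log_exp]

lemma coverEntropyOf_le_of_semiconj (hfin : α.Finite) (hα : ⋃₀ α = univ)
    (hf : Function.Semiconj f S T) (hαβ : ∀ A ∈ α, ∃ B ∈ β, f ⁻¹' A ⊆ B) :
    coverEntropyOf S β ≤ coverEntropyOf T α := by
  refine limsup_le_limsup (.of_forall fun n => EReal.coe_le_coe_iff.2 ?_)
  have hcover := (hasCylinderCover_coverNum hfin hα n).preimage hf hαβ
  rw [← Real.log_of_nat_eq_posLog, ← Real.log_of_nat_eq_posLog]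
  exact div_le_div_of_nonneg_right
    (Real.posLog_le_posLog (Nat.cast_nonneg _) (coverNum_le_of_hasCylinderCover hcover))
    n.cast_nonneg

lemma topEntropy_nonneg [TopologicalSpace X] (T : X → X) : 0 ≤ topEntropy T :=
  (coverEntropyOf_nonneg T {univ}).trans
    (le_iSup₂_of_le {univ} ⟨finite_singleton _, by simp, by simp, by simp⟩ le_rfl)

end Entropy

section AdmissibleCover

variable {X : Type*} [TopologicalSpace X] {α : Set (Set X)} {F : Set X}

namespace IsAdmissibleCover

/- If all closures of elements are compact, then so is the space. -/
lemma exists_isCompact_compl [Nonempty X] (hα : IsAdmissibleCover α) : ∃ A ∈ α, IsCompact Aᶜ := by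
  obtain ⟨hfin, hopen, hcover, hcpt⟩ := hα
  by_contra! hcontra
  have hclosure : ⋃ A ∈ α, closure A = univ :=
    univ_subset_iff.1 (hcover ▸ sUnion_subset fun A hA =>
      subset_closure.trans (subset_biUnion_of_mem hA))
  have : CompactSpace X := ⟨hclosure ▸ hfin.isCompact_biUnion fun A hA =>
    (hcpt A hA).resolve_right (hcontra A hA)⟩
  obtain ⟨A, hA, -⟩ := sUnion_eq_univ_iff.1 hcover (Classical.arbitrary X)
  exact hcontra A hA (hopen A hA).isClosed_compl.isCompact

lemma preimage_val (hα : IsAdmissibleCover α) (hF : IsClosed F) :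
    IsAdmissibleCover (preimage (Subtype.val : F → X) '' α) := by
  obtain ⟨hfin, hopen, hcover, hcpt⟩ := hα
  have hemb := hF.isClosedEmbedding_subtypeVal
  refine ⟨hfin.image _, forall_mem_image.2 fun A hA => (hopen A hA).preimage hemb.continuous,
    sUnion_image_preimage _ hcover, forall_mem_image.2 fun A hA => (hcpt A hA).imp ?_ ?_⟩
  · exact fun h => (hemb.isCompact_preimage h).of_isClosed_subset isClosed_closure
      (hemb.continuous.closure_preimage_subset A)
  · exact fun h => hemb.isCompact_preimage h

end IsAdmissibleCover

variable [T2Space X] [LocallyCompactSpace X]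

lemma exists_isOpen_extension {B : Set F} (hB : IsOpen B)
    (hcpt : IsCompact (closure B) ∨ IsCompact Bᶜ) :
    ∃ V : Set X, IsOpen V ∧ Subtype.val ⁻¹' V = B ∧ (IsCompact (closure V) ∨ IsCompact Vᶜ) ∧
      (IsCompact Bᶜ → IsCompact Vᶜ) := by
  by_cases hBc : IsCompact Bᶜ
  · have hc : IsCompact (Subtype.val '' Bᶜ : Set X) := hBc.image continuous_subtype_val
    refine ⟨(Subtype.val '' Bᶜ)ᶜ, hc.isClosed.isOpen_compl, ?_, ?_, ?_⟩
    · rw [preimage_compl, preimage_image_eq _ Subtype.val_injective, compl_compl]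
    · rwa [compl_compl, or_iff_right_of_imp (fun _ => hc)]
    · rwa [compl_compl, imp_iff_right hBc]
  · have hc : IsCompact (Subtype.val '' closure B : Set X) :=
      (hcpt.resolve_right hBc).image continuous_subtype_val
    obtain ⟨V, hV, rfl⟩ := isOpen_induced_iff.1 hB
    obtain ⟨O, hO, hBO, -, hOc⟩ :=
      exists_open_between_and_isCompact_closure hc isOpen_univ (subset_univ _)
    refine ⟨V ∩ O, hV.inter hO, ?_, .inl ?_, fun h => absurd h hBc⟩
    · exact inter_eq_left.2 fun y hy => hBO (mem_image_of_mem _ (subset_closure hy))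
    · exact hOc.of_isClosed_subset isClosed_closure (closure_mono inter_subset_right)

/- The part of `X` missed by the extensions of the elements of `β` is compact and disjoint from
`F`, hence can be covered by one more relatively compact open set whose trace on `F` is empty. -/
lemma IsAdmissibleCover.exists_extension (hF : IsClosed F) (hne : F.Nonempty) {β : Set (Set F)}
    (hβ : IsAdmissibleCover β) :
    ∃ α : Set (Set X), IsAdmissibleCover α ∧ ∀ A ∈ α, ∃ B ∈ β, Subtype.val ⁻¹' A ⊆ B := by
  have := hne.to_subtype
  obtain ⟨B₀, hB₀, hB₀c⟩ := hβ.exists_isCompact_compl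
  obtain ⟨hfin, hopen, hcover, hcpt⟩ := hβ
  choose! V hVo hVB hVc hVcompl using fun B (hB : B ∈ β) =>
    exists_isOpen_extension (hopen B hB) (hcpt B hB)
  have hFV : F ⊆ ⋃₀ (V '' β) := fun x hx => by
    obtain ⟨B, hB, hxB⟩ := sUnion_eq_univ_iff.1 hcover ⟨x, hx⟩
    exact ⟨V B, mem_image_of_mem V hB, (hVB B hB).symm.subset hxB⟩
  have hmissed : IsCompact (⋃₀ (V '' β))ᶜ :=
    (hVcompl B₀ hB₀ hB₀c).of_isClosed_subset
      (isOpen_sUnion (forall_mem_image.2 hVo)).isClosed_compl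
      (compl_subset_compl.2 (subset_sUnion_of_mem (mem_image_of_mem V hB₀)))
  obtain ⟨E, hE, hmissedE, hEF, hEc⟩ := exists_open_between_and_isCompact_closure hmissed
    hF.isOpen_compl (compl_subset_compl.2 hFV)
  refine ⟨insert E (V '' β), ⟨(hfin.image V).insert E, ?_, ?_, ?_⟩, ?_⟩
  · exact forall_mem_insert.2 ⟨hE, forall_mem_image.2 hVo⟩
  · rw [sUnion_insert, ← univ_subset_iff, ← compl_union_self (⋃₀ (V '' β))]
    gcongr
  · exact forall_mem_insert.2 ⟨.inl hEc, forall_mem_image.2 hVc⟩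
  · refine forall_mem_insert.2 ⟨⟨B₀, hB₀, fun y hy => ?_⟩, forall_mem_image.2 fun B hB => ?_⟩
    · exact absurd y.2 (hEF (subset_closure hy))
    · exact ⟨B, hB, (hVB B hB).subset⟩

end AdmissibleCover

section RareVisits

variable {X : Type*} [TopologicalSpace X] {T : X → X} {F : Set X}

lemma coverEntropyOf_le_coverEntropyOf_restrict [Nonempty X] (hT : Continuous T)
    (hM : MapsTo T F F)
    (hrare : ∀ C, IsCompact C → Disjoint C F → ∀ ε > 0, ∀ᶠ n : ℕ in atTop, ∀ x,
      birkhoffSum T (C.indicator (1 : X → ℝ)) n x ≤ ε * n)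
    {α : Set (Set X)} (hα : IsAdmissibleCover α) :
    coverEntropyOf T α ≤ coverEntropyOf (hM.restrict T F F) (preimage Subtype.val '' α) := by
  obtain ⟨A, hA, hAc⟩ := hα.exists_isCompact_compl
  obtain ⟨hfin, hopen, hcover, -⟩ := hα
  refine EReal.le_of_forall_lt_iff_le.1 fun s hs => ?_
  obtain ⟨t, ht, hts⟩ := EReal.lt_iff_exists_real_btwn.1 hs
  have ht0 : 0 < t := mod_cast (coverEntropyOf_nonneg _ _).trans_lt ht
  obtain ⟨r, htr, hrs⟩ := exists_between (EReal.coe_lt_coe_iff.1 hts)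
  have hr : 0 < r := ht0.trans htr
  obtain ⟨p, hp, q, hq, hcost⟩ := exists_block_parameters htr hr (eventually_coverNum_le_exp ht)
    (coverNum (coverIter T α 1))
  obtain ⟨U, hUo, hFU, hU⟩ := ((hasCylinderCover_coverNum (hfin.image _)
    (sUnion_image_preimage _ hcover) p).of_preimage (semiconj_val_restrict hM)
    ).exists_isOpen_superset hT hopen
  rw [Subtype.range_val] at hFU
  have hdisj : Disjoint (Aᶜ \ U) F := disjoint_sdiff_left.mono_right hFU
  have hδ : 0 < (s - r) / (q + 1) := div_pos (sub_pos.2 hrs) (by positivity)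
  refine coverEntropyOf_le_of_hasCylinderCover (D := coverNum (coverIter T α p))
    (hr.trans hrs).le ?_
  filter_upwards [hrare _ (hAc.diff hUo) hdisj _ hδ] with n hn
  refine (hasCylinderCover_setOf_birkhoffSum_le hp hr.le hq hU (.of_mem hA)
    ((hasCylinderCover_coverNum hfin hcover 1).mono (subset_univ _) le_rfl) ?_
    (hasCylinderCover_coverNum hfin hcover p) hcost n _).mono (fun x _ => hn x) ?_
  · rw [union_assoc, ← univ_subset_iff]
    intro x _
    by_cases hxU : x ∈ U <;> by_cases hxA : x ∈ A <;> simp [hxU, hxA]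
  · gcongr
    have : q * ((s - r) / (q + 1)) ≤ s - r := by
      rw [mul_div_left_comm]
      exact mul_le_of_le_one_right (sub_pos.2 hrs).le
        ((div_le_one (by positivity)).2 (by linarith))
    nlinarith [(n.cast_nonneg : (0 : ℝ) ≤ n)]

lemma topEntropy_restrict_le [T2Space X] [LocallyCompactSpace X] (hF : IsClosed F)
    (hM : MapsTo T F F) :
    topEntropy (hM.restrict T F F) ≤ topEntropy T := by
  refine iSup₂_le fun β hβ => ?_
  rcases F.eq_empty_or_nonempty with rfl | hne
  · exact (coverEntropyOf_of_isEmpty _ β).trans_le (topEntropy_nonneg T)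
  obtain ⟨α, hα, hαβ⟩ := hβ.exists_extension hF hne
  exact (coverEntropyOf_le_of_semiconj hα.1 hα.2.2.1 (semiconj_val_restrict hM) hαβ).trans
    (le_iSup₂_of_le α hα le_rfl)

lemma topEntropy_le_restrict (hT : Continuous T) (hF : IsClosed F) (hM : MapsTo T F F)
    (hrare : ∀ C, IsCompact C → Disjoint C F → ∀ ε > 0, ∀ᶠ n : ℕ in atTop, ∀ x,
      birkhoffSum T (C.indicator (1 : X → ℝ)) n x ≤ ε * n) :
    topEntropy T ≤ topEntropy (hM.restrict T F F) := by
  refine iSup₂_le fun α hα => ?_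
  cases isEmpty_or_nonempty X
  · exact (coverEntropyOf_of_isEmpty T α).trans_le (topEntropy_nonneg _)
  · exact (coverEntropyOf_le_coverEntropyOf_restrict hT hM hrare hα).trans
      (le_iSup₂_of_le _ (hα.preimage_val hF) le_rfl)

end RareVisits

section EmpiricalMeasures

open scoped CompactlySupported

variable {X : Type*} {T : X → X} {g h : X → ℝ} {n : ℕ} {x : X}

lemma birkhoffAverage_mono (hgh : g ≤ h) : birkhoffAverage ℝ T g n x ≤ birkhoffAverage ℝ T h n x :=
  smul_le_smul_of_nonneg_left (Finset.sum_le_sum fun _ _ => hgh _) (by positivity)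

lemma birkhoffAverage_le_of_forall_le {B : ℝ} (hB : 0 ≤ B) (hg : ∀ y, g y ≤ B) :
    birkhoffAverage ℝ T g n x ≤ B := by
  rw [birkhoffAverage, smul_eq_mul, inv_mul_eq_div]
  refine div_le_of_le_mul₀ n.cast_nonneg hB ?_
  simpa [birkhoffSum, mul_comm] using
    Finset.sum_le_card_nsmul (Finset.range n) _ B fun k _ => hg (T^[k] x)

lemma abs_birkhoffAverage_le {B : ℝ} (hg : ∀ y, |g y| ≤ B) : |birkhoffAverage ℝ T g n x| ≤ B := by
  have hB : 0 ≤ B := (abs_nonneg _).trans (hg x)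
  refine abs_le'.2 ⟨birkhoffAverage_le_of_forall_le hB fun y => (le_abs_self _).trans (hg y), ?_⟩
  have hneg := birkhoffAverage_le_of_forall_le (T := T) (n := n) (x := x) (g := -g) hB
    fun y => (neg_le_abs _).trans (hg y)
  rwa [birkhoffAverage_neg] at hneg

lemma birkhoffAverage_comp_self :
    birkhoffAverage ℝ T (g ∘ T) n x = birkhoffAverage ℝ T g n (T x) := by
  simp only [birkhoffAverage, birkhoffSum, Function.comp_apply, ← Function.iterate_succ_apply',
    Function.iterate_succ_apply]

variable [TopologicalSpace X]

lemma exists_forall_abs_le (f : C_c(X, ℝ)) : ∃ B, ∀ y, |f y| ≤ B :=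
  f.hasCompactSupport.exists_bound_of_continuous f.continuous

variable (𝒰 : Ultrafilter ℕ) (T) (x : ℕ → X)

lemma exists_tendsto_birkhoffAverage (f : C_c(X, ℝ)) :
    ∃ L, Tendsto (fun n => birkhoffAverage ℝ T f n (x n)) 𝒰 (𝓝 L) := by
  obtain ⟨B, hB⟩ := exists_forall_abs_le f
  obtain ⟨L, -, hL⟩ := (isCompact_Icc (a := -B) (b := B)).ultrafilter_le_nhds
    (𝒰.map fun n => birkhoffAverage ℝ T f n (x n))
    (tendsto_principal.2 (Eventually.of_forall fun n => abs_le.1 (abs_birkhoffAverage_le hB)))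
  exact ⟨L, hL⟩

/-- The limit along the ultrafilter `𝒰` of the empirical measures of the orbit segments of length
`n` starting at `x n`, as a functional on compactly supported functions. -/
noncomputable def empiricalLimit : C_c(X, ℝ) →ₚ[ℝ] ℝ :=
  PositiveLinearMap.mk₀
    { toFun f := limUnder 𝒰 fun n => birkhoffAverage ℝ T f n (x n)
      map_add' f g := by
        refine Tendsto.limUnder_eq (((tendsto_nhds_limUnder
          (exists_tendsto_birkhoffAverage T 𝒰 x f)).add (tendsto_nhds_limUnder
          (exists_tendsto_birkhoffAverage T 𝒰 x g))).congr fun n => ?_)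
        rw [CompactlySupportedContinuousMap.coe_add, birkhoffAverage_add, Pi.add_apply,
          Pi.add_apply]
      map_smul' c f := by
        refine Tendsto.limUnder_eq (((tendsto_nhds_limUnder
          (exists_tendsto_birkhoffAverage T 𝒰 x f)).const_smul c).congr fun n => ?_)
        simp only [birkhoffAverage, birkhoffSum, CompactlySupportedContinuousMap.coe_smul,
          Pi.smul_apply, ← Finset.smul_sum, smul_comm c] }
    fun f hf => ge_of_tendsto
      (tendsto_nhds_limUnder (exists_tendsto_birkhoffAverage T 𝒰 x f)) <| .of_forall fun n =>
        smul_nonneg (by positivity) (birkhoffSum_nonneg hf _ _)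

lemma tendsto_empiricalLimit (f : C_c(X, ℝ)) :
    Tendsto (fun n => birkhoffAverage ℝ T f n (x n)) 𝒰 (𝓝 (empiricalLimit T 𝒰 x f)) :=
  tendsto_nhds_limUnder (exists_tendsto_birkhoffAverage T 𝒰 x f)

variable {𝒰 T x}

lemma empiricalLimit_le_one {f : C_c(X, ℝ)} (hf : ∀ y, f y ≤ 1) : empiricalLimit T 𝒰 x f ≤ 1 :=
  le_of_tendsto' (tendsto_empiricalLimit T 𝒰 x f) fun _ =>
    birkhoffAverage_le_of_forall_le zero_le_one hf

lemma le_empiricalLimit {C : Set X} {ε : ℝ}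
    (hε : ∀ᶠ n in 𝒰, ε ≤ birkhoffAverage ℝ T (C.indicator 1) n (x n)) {f : C_c(X, ℝ)}
    (hf : C.indicator 1 ≤ ⇑f) : ε ≤ empiricalLimit T 𝒰 x f :=
  ge_of_tendsto (tendsto_empiricalLimit T 𝒰 x f)
    (hε.mono fun _ hn => hn.trans (birkhoffAverage_mono hf))

lemma empiricalLimit_le_of_le_comp (h𝒰 : ↑𝒰 ≤ (atTop : Filter ℕ)) {f g : C_c(X, ℝ)}
    (hgf : ∀ y, g y ≤ f (T y)) : empiricalLimit T 𝒰 x g ≤ empiricalLimit T 𝒰 x f := by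
  obtain ⟨B, hB⟩ := exists_forall_abs_le f
  have hshift : Tendsto (fun n => birkhoffAverage ℝ T f n (T (x n)) -
      birkhoffAverage ℝ T f n (x n)) 𝒰 (𝓝 0) := by
    refine squeeze_zero_norm (fun n => ?_)
      ((tendsto_const_div_atTop_nhds_zero_nat (B + B)).mono_left h𝒰)
    rw [← dist_eq_norm, dist_birkhoffAverage_apply_birkhoffAverage, dist_eq_norm]
    gcongr
    exact (norm_sub_le _ _).trans (add_le_add (hB _) (hB _))
  have hlim := (tendsto_empiricalLimit T 𝒰 x f).add hshift
  rw [add_zero] at hlim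
  refine le_of_tendsto_of_tendsto' (tendsto_empiricalLimit T 𝒰 x g) hlim fun n => ?_
  rw [add_sub_cancel, ← birkhoffAverage_comp_self]
  exact birkhoffAverage_mono hgf

end EmpiricalMeasures

section RieszMeasure

open scoped CompactlySupported

variable {X : Type*} [TopologicalSpace X] [LocallyCompactSpace X] [T2Space X]

lemma exists_compactlySupported_eqOn_one {K V : Set X} (hK : IsCompact K) (hV : IsOpen V)
    (hKV : K ⊆ V) :
    ∃ f : C_c(X, ℝ), EqOn f 1 K ∧ tsupport f ⊆ V ∧ ∀ x, 0 ≤ f x ∧ f x ≤ 1 := by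
  obtain ⟨f, hf1, hfc, hfV, hf01⟩ := exists_continuousMap_one_of_isCompact_subset_isOpen hK hV hKV
  exact ⟨⟨f, hfc⟩, hf1, hfV, hf01⟩

variable [MeasurableSpace X] [BorelSpace X] {Λ : C_c(X, ℝ) →ₚ[ℝ] ℝ} {T : X → X}

lemma ofReal_le_rieszMeasure {C : Set X} (hC : IsCompact C) {c : ℝ}
    (hc : ∀ f : C_c(X, ℝ), C.indicator 1 ≤ ⇑f → c ≤ Λ f) :
    ENNReal.ofReal c ≤ RealRMK.rieszMeasure Λ C := by
  rw [C.measure_eq_iInf_isOpen]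
  refine le_iInf fun V => le_iInf fun hCV => le_iInf fun hV => ?_
  obtain ⟨f, hf1, hfV, hf01⟩ := exists_compactlySupported_eqOn_one hC hV hCV
  exact (ENNReal.ofReal_le_ofReal (hc f
    (indicator_le' (fun x hx => (hf1 hx).ge) fun x _ => (hf01 x).1))).trans
    (RealRMK.le_rieszMeasure_tsupport_subset Λ hf01 hfV)

lemma rieszMeasure_univ_le_one (hΛ : ∀ f : C_c(X, ℝ), (∀ x, f x ≤ 1) → Λ f ≤ 1) :
    RealRMK.rieszMeasure Λ univ ≤ 1 := by
  rw [isOpen_univ.measure_eq_iSup_isCompact]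
  refine iSup_le fun K => iSup_le fun _ => iSup_le fun hK => ?_
  obtain ⟨f, hf1, -, hf01⟩ :=
    exists_compactlySupported_eqOn_one hK isOpen_univ K.subset_univ
  exact (RealRMK.rieszMeasure_le_of_eq_one Λ (fun x => (hf01 x).1) hK hf1).trans
    (ENNReal.ofReal_le_one.2 (hΛ f fun x => (hf01 x).2))

/- `f ∘ T` need not have compact support, so it is multiplied by a cut-off. -/
lemma rieszMeasure_preimage_le (hT : Continuous T)
    (hΛ : ∀ f g : C_c(X, ℝ), (∀ x, g x ≤ f (T x)) → Λ g ≤ Λ f) {V : Set X} (hV : IsOpen V) :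
    RealRMK.rieszMeasure Λ (T ⁻¹' V) ≤ RealRMK.rieszMeasure Λ V := by
  rw [(hV.preimage hT).measure_eq_iSup_isCompact]
  refine iSup_le fun K => iSup_le fun hKV => iSup_le fun hK => ?_
  obtain ⟨f, hf1, hfV, hf01⟩ :=
    exists_compactlySupported_eqOn_one (hK.image hT) hV (image_subset_iff.2 hKV)
  obtain ⟨χ, hχ1, -, hχ01⟩ :=
    exists_compactlySupported_eqOn_one hK isOpen_univ K.subset_univ
  let g : C_c(X, ℝ) := ⟨⟨fun x => χ x * f (T x), by fun_prop⟩, χ.hasCompactSupport.mul_right⟩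
  have hg1 (x : X) (hx : x ∈ K) : g x = 1 := by
    change χ x * f (T x) = 1
    rw [hχ1 hx, hf1 (mem_image_of_mem T hx), Pi.one_apply, Pi.one_apply, mul_one]
  calc RealRMK.rieszMeasure Λ K ≤ ENNReal.ofReal (Λ g) :=
        RealRMK.rieszMeasure_le_of_eq_one Λ
          (fun x => mul_nonneg (hχ01 x).1 (hf01 (T x)).1) hK hg1
    _ ≤ ENNReal.ofReal (Λ f) := ENNReal.ofReal_le_ofReal
        (hΛ f g fun x => mul_le_of_le_one_left (hf01 (T x)).1 (hχ01 x).2)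
    _ ≤ RealRMK.rieszMeasure Λ V := RealRMK.le_rieszMeasure_tsupport_subset Λ hf01 hfV

end RieszMeasure

section InvariantMeasure

variable {X : Type*} [MeasurableSpace X] {T : X → X}

lemma measure_eq_zero_of_forall_isProbabilityMeasure {C : Set X}
    (hC : ∀ μ : Measure X, IsProbabilityMeasure μ → MeasurePreserving T μ μ → μ C = 0)
    {μ : Measure X} [IsFiniteMeasure μ] (hμ : MeasurePreserving T μ μ) : μ C = 0 := by
  rcases eq_zero_or_neZero μ with rfl | _
  · rfl
  have hC' := hC ((μ univ)⁻¹ • μ) inferInstance (hμ.smul_measure _)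
  rwa [Measure.smul_apply, smul_eq_mul, mul_eq_zero_iff_left
    (ENNReal.inv_ne_zero.2 (measure_ne_top μ univ))] at hC'

variable [TopologicalSpace X]

lemma measurePreserving_of_forall_isOpen [OpensMeasurableSpace X] {μ : Measure X}
    [IsFiniteMeasure μ] [μ.OuterRegular] (hT : Measurable T)
    (h : ∀ V, IsOpen V → μ (T ⁻¹' V) ≤ μ V) : MeasurePreserving T μ μ := by
  refine ⟨hT, Measure.eq_of_le_of_measure_univ_eq (Measure.le_iff.2 fun s hs => ?_) ?_⟩
  · rw [Measure.map_apply hT hs, s.measure_eq_iInf_isOpen μ]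
    exact le_iInf fun V => le_iInf fun hsV => le_iInf fun hV =>
      (measure_mono (preimage_mono hsV)).trans (h V hV)
  · rw [Measure.map_apply hT .univ, preimage_univ]

variable [BorelSpace X] [LocallyCompactSpace X] [T2Space X] {C : Set X}

/- Krylov–Bogolyubov: a limit of the empirical measures along the orbits of `x n`. -/
lemma exists_measurePreserving_ofReal_le (hT : Continuous T) (hC : IsCompact C)
    {𝒰 : Ultrafilter ℕ} (h𝒰 : ↑𝒰 ≤ (atTop : Filter ℕ)) {x : ℕ → X} {ε : ℝ}
    (hε : ∀ᶠ n in 𝒰, ε ≤ birkhoffAverage ℝ T (C.indicator 1) n (x n)) :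
    ∃ μ : Measure X, IsFiniteMeasure μ ∧ MeasurePreserving T μ μ ∧ ENNReal.ofReal ε ≤ μ C := by
  have hfin : IsFiniteMeasure (RealRMK.rieszMeasure (empiricalLimit T 𝒰 x)) :=
    ⟨(rieszMeasure_univ_le_one fun _ => empiricalLimit_le_one).trans_lt ENNReal.one_lt_top⟩
  exact ⟨_, hfin,
    measurePreserving_of_forall_isOpen hT.measurable fun _ =>
      rieszMeasure_preimage_le hT fun _ _ => empiricalLimit_le_of_le_comp h𝒰,
    ofReal_le_rieszMeasure hC fun _ => le_empiricalLimit hε⟩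

/- Otherwise some limit of empirical measures is an invariant measure charging `C`. -/
lemma eventually_birkhoffSum_indicator_le (hT : Continuous T) (hC : IsCompact C)
    (hnull : ∀ μ : Measure X, IsProbabilityMeasure μ → MeasurePreserving T μ μ → μ C = 0) {ε : ℝ}
    (hε : 0 < ε) : ∀ᶠ n : ℕ in atTop, ∀ x, birkhoffSum T (C.indicator 1) n x ≤ ε * n := by
  by_contra hfreq
  rw [not_eventually] at hfreq
  push Not at hfreq
  have : Nonempty X := ⟨hfreq.exists.choose_spec.choose⟩
  let bad : Set ℕ := {n | ∃ x, ε * n < birkhoffSum T (C.indicator 1) n x}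
  choose! x hx using fun n (hn : n ∈ bad) => hn
  have : (atTop ⊓ 𝓟 bad).NeBot := frequently_mem_iff_neBot.1 hfreq
  obtain ⟨h𝒰, hbad⟩ := le_inf_iff.1 (Ultrafilter.of_le (atTop ⊓ 𝓟 bad))
  have hdensity : ∀ᶠ n in Ultrafilter.of (atTop ⊓ 𝓟 bad),
      ε ≤ birkhoffAverage ℝ T (C.indicator 1) n (x n) := by
    filter_upwards [h𝒰 (eventually_gt_atTop 0), le_principal_iff.1 hbad] with n hn hnbad
    rw [birkhoffAverage, smul_eq_mul, inv_mul_eq_div, le_div_iff₀ (Nat.cast_pos.2 hn)]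
    exact (hx n hnbad).le
  obtain ⟨μ, hμ, hμT, hμC⟩ := exists_measurePreserving_ofReal_le hT hC h𝒰 hdensity
  rw [measure_eq_zero_of_forall_isProbabilityMeasure hnull hμT] at hμC
  exact hμC.not_gt (ENNReal.ofReal_pos.2 hε)

end InvariantMeasure

section RecurrentSet

variable {X : Type*} [TopologicalSpace X] [SecondCountableTopology X] [MeasurableSpace X]
  [OpensMeasurableSpace X]

lemma ae_mem_recurrentSet {T : X → X} {μ : Measure X} (hμ : Conservative T μ) :
    ∀ᵐ x ∂μ, x ∈ recurrentSet T :=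
  hμ.ae_frequently_mem_of_mem_nhds.mono fun _ hx => mapClusterPt_iff_frequently.2 hx

end RecurrentSet

section MeasureEntropy

variable {X Y : Type*} {T : X → X} {S : Y → Y} {f : Y → X} {𝒜 : Set (Set X)}

lemma pairwiseDisjoint_coverIter (h : 𝒜.PairwiseDisjoint id) (n : ℕ) :
    (coverIter T 𝒜 n).PairwiseDisjoint id := by
  rintro _ ⟨A, hA, rfl⟩ _ ⟨A', hA', rfl⟩ hne
  obtain ⟨i, hi⟩ : ∃ i, A i ≠ A' i := by
    by_contra! heq
    exact hne (by rw [funext heq])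
  exact ((h (hA i) (hA' i) hi).preimage T^[i]).mono (iInter_subset _ i) (iInter_subset _ i)

variable [MeasurableSpace X] [MeasurableSpace Y] {μ : Measure X} {ν : Measure Y}

lemma measurableSet_of_mem_coverIter (hT : Measurable T) (h : ∀ A ∈ 𝒜, MeasurableSet A) {n : ℕ}
    {B : Set X} (hB : B ∈ coverIter T 𝒜 n) : MeasurableSet B := by
  obtain ⟨A, hA, rfl⟩ := hB
  exact .iInter fun i => hT.iterate i (h _ (hA i))

/- Distinct sets of `𝒜` may have the same preimage only if that preimage is empty. -/
lemma partStatic_image_preimage (hf : MeasurePreserving f ν μ) (h𝒜 : ∀ A ∈ 𝒜, MeasurableSet A)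
    (hdis : 𝒜.PairwiseDisjoint id) : partStatic ν (preimage f '' 𝒜) = partStatic μ 𝒜 := by
  rw [partStatic, finsum_mem_image']
  · exact finsum_mem_congr rfl fun A hA => by rw [hf.measure_preimage (h𝒜 A hA).nullMeasurableSet]
  · rintro A ⟨hA, hAs⟩ A' ⟨hA', -⟩ heq
    obtain ⟨y, hy⟩ : (f ⁻¹' A).Nonempty := by
      rw [nonempty_iff_ne_empty]
      intro hempty
      simp [hempty] at hAs
    exact hdis.elim_set hA hA' (f y) hy (heq.subset hy)

lemma measPartEntropy_image_preimage (hT : Measurable T) (hf : MeasurePreserving f ν μ)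
    (h : Function.Semiconj f S T) (h𝒜 : ∀ A ∈ 𝒜, MeasurableSet A)
    (hdis : 𝒜.PairwiseDisjoint id) :
    measPartEntropy S ν (preimage f '' 𝒜) = measPartEntropy T μ 𝒜 := by
  simp only [measPartEntropy, coverIter_image_preimage h,
    partStatic_image_preimage hf (fun _ => measurableSet_of_mem_coverIter hT h𝒜)
      (pairwiseDisjoint_coverIter hdis _)]

lemma IsFinBorelPartition.image_preimage (h𝒜 : IsFinBorelPartition 𝒜) (hf : Measurable f) :
    IsFinBorelPartition (preimage f '' 𝒜) := by
  refine ⟨h𝒜.1.image _, forall_mem_image.2 fun A hA => hf (h𝒜.2.1 A hA), ?_, ?_⟩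
  · rintro _ ⟨A, hA, rfl⟩ _ ⟨A', hA', rfl⟩ hne
    exact (h𝒜.2.2.1 hA hA' fun h => hne (h ▸ rfl)).preimage f
  · exact sUnion_image_preimage f h𝒜.2.2.2

lemma measEntropy_le_of_semiconj (hT : Measurable T) (hf : MeasurePreserving f ν μ)
    (h : Function.Semiconj f S T) : measEntropy T μ ≤ measEntropy S ν :=
  iSup₂_le fun _ h𝒜 =>
    (measPartEntropy_image_preimage hT hf h h𝒜.2.1 h𝒜.2.2.1).ge.trans
      (le_iSup₂_of_le _ (h𝒜.image_preimage hf.measurable) le_rfl)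

/- A left inverse of `f` pulls partitions of `Y` back to `X`, although it need not be
equivariant. -/
lemma measEntropy_eq_of_measurableEmbedding [Nonempty Y] (hT : Measurable T)
    (hf : MeasurePreserving f ν μ) (hfe : MeasurableEmbedding f) (h : Function.Semiconj f S T) :
    measEntropy T μ = measEntropy S ν := by
  refine (measEntropy_le_of_semiconj hT hf h).antisymm (iSup₂_le fun ℬ hℬ => ?_)
  have hpull : IsFinBorelPartition (preimage hfe.invFun '' ℬ) :=
    hℬ.image_preimage hfe.measurable_invFun
  have himage : preimage f '' (preimage hfe.invFun '' ℬ) = ℬ := by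
    simp only [image_image, ← preimage_comp, hfe.leftInverse_invFun.comp_eq_id, preimage_id,
      image_id']
  rw [← himage, measPartEntropy_image_preimage hT hf h hpull.2.1 hpull.2.2.1]
  exact le_iSup₂_of_le _ hpull le_rfl

lemma measurePreserving_val_comap {F : Set X} (hF : MeasurableSet F) (hae : ∀ᵐ x ∂μ, x ∈ F) :
    MeasurePreserving (Subtype.val : F → X) (μ.comap Subtype.val) μ := by
  have hrestrict := measurePreserving_subtype_coe (μa := μ) hF
  rwa [Measure.restrict_eq_self_of_ae_mem hae] at hrestrict

lemma measEntropy_eq_measEntropy_restrict [NeZero μ] {F : Set X} (hT : Measurable T)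
    (hF : MeasurableSet F) (hM : MapsTo T F F) (hae : ∀ᵐ x ∂μ, x ∈ F) :
    measEntropy T μ = measEntropy (hM.restrict T F F) (μ.comap Subtype.val) :=
  have : Nonempty F := nonempty_subtype.2 hae.exists
  measEntropy_eq_of_measurableEmbedding hT (measurePreserving_val_comap hF hae)
    (.subtype_coe hF) (semiconj_val_restrict hM)

end MeasureEntropy

theorem entropy_eq_entropy_restrict_recurrentSet_general {X : Type*} [TopologicalSpace X]
    [LocallyCompactSpace X] [T2Space X] [MeasurableSpace X] [BorelSpace X]
    (T : X → X) (hT : Continuous T) {F : Set X} (hF : IsClosed F) (hM : MapsTo T F F)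
    (hae : ∀ μ : Measure X, IsProbabilityMeasure μ → μ.map T = μ → ∀ᵐ x ∂μ, x ∈ F) :
    (∀ μ : Measure X, IsProbabilityMeasure μ → μ.map T = μ →
      measEntropy T μ = measEntropy (hM.restrict T F F) (μ.comap Subtype.val)) ∧
    topEntropy T = topEntropy (hM.restrict T F F) := by
  refine ⟨fun μ hμ hinv => measEntropy_eq_measEntropy_restrict hT.measurable hF.measurableSet hM
    (hae μ hμ hinv), ?_⟩
  refine le_antisymm (topEntropy_le_restrict hT hF hM fun C hC hCF ε hε => ?_)
    (topEntropy_restrict_le hF hM)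
  refine eventually_birkhoffSum_indicator_le hT hC (fun μ hμ hinv => ?_) hε
  exact measure_mono_null hCF.subset_compl_right (hae μ hμ hinv.map_eq)

/-- if the recurrent set `R(T)` of a continuous map on a locally compact
separable metrizable space is closed, then every `T`-invariant Borel probability has
`h_μ(T) = h_μ(T|_{R(T)})`, and consequently `h(T) = h(T|_{R(T)})`. -/
theorem entropy_eq_entropy_restrict_recurrentSet {X : Type*} [TopologicalSpace X]
    [LocallyCompactSpace X] [TopologicalSpace.SeparableSpace X]
    [TopologicalSpace.MetrizableSpace X] [MeasurableSpace X] [BorelSpace X]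
    (T : X → X) (hT : Continuous T) (hR : IsClosed (recurrentSet T))
    (hM : Set.MapsTo T (recurrentSet T) (recurrentSet T)) :
    (∀ μ : Measure X, IsProbabilityMeasure μ → μ.map T = μ →
      measEntropy T μ =
        measEntropy (Set.MapsTo.restrict T _ _ hM) (μ.comap (Subtype.val))) ∧
    topEntropy T = topEntropy (Set.MapsTo.restrict T _ _ hM) := by
  let := TopologicalSpace.metrizableSpaceMetric X
  have := UniformSpace.secondCountable_of_separable X
  exact entropy_eq_entropy_restrict_recurrentSet_general T hT hR hM fun μ _ hμ =>
    ae_mem_recurrentSet (MeasurePreserving.conservative ⟨hT.measurable, hμ⟩)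
end
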